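/- arXiv:2502.09634 — 6 statements merged into one kernel-verified Lean document; each statement's English description precedes it below -/
import Mathlib

section
/- Let (X,d) be a complete vector B-metric space with B inverse-positive, let N : X → X satisfy d(N(x),N(y)) ≤ A d(x,y) for all x,y ∈ X with A a nonnegative matrix convergent to zero, let x* be the unique fixed point of N, and let x_{k+1} = N(x_k) be the successive approximations starting from x₀ ∈ X. Then (B⁻¹ − A) d(x_k, x*) ≤ A^k d(x₀, x₁) for all k ≥ 0. If in addition the matrix B⁻¹ − A is inverse-positive, then d(x_k, x*) ≤ (B⁻¹ − A)⁻¹ A^k d(x₀, x₁) for all k ≥ 0. -/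
open Filter Matrix Topology

/-- Convergence of a sequence to a point with respect to a vector-valued distance. -/
def VConv {X : Type*} {n : ℕ} (d : X → X → Fin n → ℝ) (x : ℕ → X) (l : X) : Prop :=
  Filter.Tendsto (fun k => d (x k) l) Filter.atTop (nhds 0)

/-- Cauchy sequence with respect to a vector-valued distance. -/
def VCauchy {X : Type*} {n : ℕ} (d : X → X → Fin n → ℝ) (x : ℕ → X) : Prop :=
  Filter.Tendsto (fun p : ℕ × ℕ => d (x p.1) (x p.2)) Filter.atTop (nhds 0)

/-- Completeness: every Cauchy sequence converges. -/
def VComplete {X : Type*} {n : ℕ} (d : X → X → Fin n → ℝ) : Prop :=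
  ∀ x : ℕ → X, VCauchy d x → ∃ l, VConv d x l

/-- `d` is a vector `B`-metric on `X`. -/
def IsVectorBMetric {X : Type*} {n : ℕ} (B : Matrix (Fin n) (Fin n) ℝ)
    (d : X → X → Fin n → ℝ) : Prop :=
  (∀ u v, 0 ≤ d u v) ∧ (∀ u v, d u v = 0 ↔ u = v) ∧
  (∀ u v, d u v = d v u) ∧
  (∀ u v w, d u w ≤ B.mulVec (d u v + d v w))

/-- A matrix is positive if all its entries are nonnegative. -/
def MatPos {n : ℕ} (M : Matrix (Fin n) (Fin n) ℝ) : Prop := ∀ i j, 0 ≤ M i j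

/-- A matrix is convergent to zero if its powers tend to the zero matrix. -/
def MatConvZero {n : ℕ} (A : Matrix (Fin n) (Fin n) ℝ) : Prop :=
  Filter.Tendsto (fun k => A ^ k) Filter.atTop (nhds 0)

/-- A matrix is inverse-positive if it is invertible and its inverse is positive. -/
def InvPos {n : ℕ} (M : Matrix (Fin n) (Fin n) ℝ) : Prop :=
  IsUnit M ∧ MatPos M⁻¹

/-!
Multiplying the `B`-triangle inequality through `x_{k+1}` by the nonnegative matrix `B⁻¹` gives
`B⁻¹ d(x_k, x*) ≤ d(x_k, x_{k+1}) + d(x_{k+1}, x*)`. The contraction condition bounds the two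
summands by `A ^ k d(x₀, x₁)` and `A d(x_k, x*)`, and the latter is absorbed on the left.
-/

section MulVec

variable {m n R : Type*} [Fintype n] [Semiring R] [PartialOrder R] [IsOrderedRing R]

theorem mulVec_le_mulVec_of_nonneg_left {M : Matrix m n R} (hM : ∀ i j, 0 ≤ M i j)
    {v w : n → R} (h : v ≤ w) : M *ᵥ v ≤ M *ᵥ w :=
  fun i => dotProduct_le_dotProduct_of_nonneg_left h (hM i)

variable [Fintype m] [DecidableEq n] {L : Matrix n m R} {M : Matrix m n R}

theorem mulVec_le_of_le_mulVec (hLM : L * M = 1) (hL : ∀ i j, 0 ≤ L i j) {v : m → R}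
    {w : n → R} (h : v ≤ M *ᵥ w) : L *ᵥ v ≤ w :=
  calc L *ᵥ v ≤ L *ᵥ (M *ᵥ w) := mulVec_le_mulVec_of_nonneg_left hL h
    _ = w := by rw [mulVec_mulVec, hLM, one_mulVec]

theorem le_mulVec_of_mulVec_le (hLM : L * M = 1) (hL : ∀ i j, 0 ≤ L i j) {v : n → R}
    {w : m → R} (h : M *ᵥ v ≤ w) : v ≤ L *ᵥ w :=
  calc v = L *ᵥ (M *ᵥ v) := by rw [mulVec_mulVec, hLM, one_mulVec]
    _ ≤ L *ᵥ w := mulVec_le_mulVec_of_nonneg_left hL h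

end MulVec

section Contraction

variable {X ι R : Type*} [Fintype ι] {d : X → X → ι → R} {A : Matrix ι ι R} {f : X → X}

theorem vectorDist_iterate_le [DecidableEq ι] [Semiring R] [PartialOrder R] [IsOrderedRing R]
    (hA : ∀ i j, 0 ≤ A i j) (hf : ∀ x y, d (f x) (f y) ≤ A *ᵥ d x y) (x y : X) (k : ℕ) :
    d (f^[k] x) (f^[k] y) ≤ (A ^ k) *ᵥ d x y := by
  induction k with
  | zero => simp
  | succ k ih =>
    calc d (f^[k + 1] x) (f^[k + 1] y)
        = d (f (f^[k] x)) (f (f^[k] y)) := by simp only [Function.iterate_succ_apply']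
      _ ≤ A *ᵥ d (f^[k] x) (f^[k] y) := hf _ _
      _ ≤ A *ᵥ ((A ^ k) *ᵥ d x y) := mulVec_le_mulVec_of_nonneg_left hA ih
      _ = (A ^ (k + 1)) *ᵥ d x y := by rw [mulVec_mulVec, pow_succ']

theorem sub_mulVec_vectorDist_fixedPoint_le [NonUnitalNonAssocRing R] [PartialOrder R]
    [IsOrderedAddMonoid R] {C : Matrix ι ι R} (hC : ∀ u v w, C *ᵥ d u w ≤ d u v + d v w)
    (hf : ∀ x y, d (f x) (f y) ≤ A *ᵥ d x y) {p : X} (hp : f p = p) (x : X) :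
    (C - A) *ᵥ d x p ≤ d x (f x) := by
  have dist_image_le : d (f x) p ≤ A *ᵥ d x p := by simpa only [hp] using hf x p
  rw [sub_mulVec, sub_le_iff_le_add]
  exact (hC x (f x) p).trans (add_le_add_right dist_image_le _)

theorem error_estimate_inverse_positive_general [DecidableEq ι] [CommRing R] [PartialOrder R]
    [IsOrderedRing R] {B : Matrix ι ι R} (hB : IsUnit B) (hB' : ∀ i j, 0 ≤ B⁻¹ i j)
    (htri : ∀ u v w, d u w ≤ B *ᵥ (d u v + d v w)) (hA : ∀ i j, 0 ≤ A i j)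
    (hf : ∀ x y, d (f x) (f y) ≤ A *ᵥ d x y) {p : X} (hp : f p = p) (x : X) :
    (∀ k : ℕ, (B⁻¹ - A) *ᵥ d (f^[k] x) p ≤ (A ^ k) *ᵥ d x (f x)) ∧
    (IsUnit (B⁻¹ - A) ∧ (∀ i j, 0 ≤ (B⁻¹ - A)⁻¹ i j) →
      ∀ k : ℕ, d (f^[k] x) p ≤ ((B⁻¹ - A)⁻¹ * A ^ k) *ᵥ d x (f x)) := by
  have inv_triangle (u v w : X) : B⁻¹ *ᵥ d u w ≤ d u v + d v w :=
    mulVec_le_of_le_mulVec (nonsing_inv_mul B ((isUnit_iff_isUnit_det B).1 hB)) hB' (htri u v w)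
  have residual_bound (k : ℕ) : (B⁻¹ - A) *ᵥ d (f^[k] x) p ≤ (A ^ k) *ᵥ d x (f x) :=
    calc (B⁻¹ - A) *ᵥ d (f^[k] x) p
        ≤ d (f^[k] x) (f (f^[k] x)) :=
          sub_mulVec_vectorDist_fixedPoint_le inv_triangle hf hp _
      _ = d (f^[k] x) (f^[k] (f x)) := by rw [Function.Commute.self_iterate f k x]
      _ ≤ (A ^ k) *ᵥ d x (f x) := vectorDist_iterate_le hA hf x (f x) k
  refine ⟨residual_bound, fun ⟨hunit, hnonneg⟩ k => ?_⟩
  have hinv : (B⁻¹ - A)⁻¹ * (B⁻¹ - A) = 1 :=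
    nonsing_inv_mul _ ((isUnit_iff_isUnit_det _).1 hunit)
  rw [← mulVec_mulVec]
  exact le_mulVec_of_mulVec_le hinv hnonneg (residual_bound k)

end Contraction

theorem error_estimate_inverse_positive {X : Type*} {n : ℕ} (hn : 0 < n)
    (B : Matrix (Fin n) (Fin n) ℝ) (d : X → X → Fin n → ℝ)
    (hmet : IsVectorBMetric B d) (hcomp : VComplete d)
    (hB : InvPos B)
    (N : X → X) (A : Matrix (Fin n) (Fin n) ℝ)
    (hA0 : MatPos A) (hA : MatConvZero A)
    (hcontr : ∀ x y : X, d (N x) (N y) ≤ A.mulVec (d x y))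
    (xs : X) (hfix : N xs = xs) (huniq : ∀ y : X, N y = y → y = xs)
    (x₀ : X) :
    (∀ k : ℕ, (B⁻¹ - A).mulVec (d (N^[k] x₀) xs) ≤ (A ^ k).mulVec (d x₀ (N x₀))) ∧
    (InvPos (B⁻¹ - A) →
      ∀ k : ℕ, d (N^[k] x₀) xs ≤ ((B⁻¹ - A)⁻¹ * A ^ k).mulVec (d x₀ (N x₀))) :=
  error_estimate_inverse_positive_general hB.1 hB.2 hmet.2.2.2 hA0 hcontr hfix x₀
end

section
/- Let (X,d) be a complete vector B-metric space with B positive, let N : X → X satisfy d(N(x),N(y)) ≤ A d(x,y) for all x,y ∈ X with A a nonnegative matrix convergent to zero, let x* be the unique fixed point of N, and let x_{k+1} = N(x_k) be the successive approximations starting from x₀ ∈ X. Then (I − BA) d(x_k, x*) ≤ B A^k d(x₀, x₁) for all k ≥ 0. If in addition the matrix I − BA is inverse-positive, then d(x_k, x*) ≤ (I − BA)⁻¹ B A^k d(x₀, x₁) for all k ≥ 0. -/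
open Filter Matrix Topology

/-!
The generalized triangle inequality through `N x` bounds `d x x*` by
`B (d x (N x)) + B (d (N x) (N x*))`, and contractivity absorbs the last term into `B A (d x x*)`.
At `x = x_k` the remaining distance `d x_k x_{k+1}` is at most `A ^ k (d x₀ x₁)`.
-/

section

variable {X ι R : Type*} [Fintype ι]

section Semiring

variable [Semiring R] [PartialOrder R] [IsOrderedRing R]

theorem mulVec_le_mulVec_of_nonneg {κ : Type*} {M : Matrix κ ι R} (hM : ∀ i j, 0 ≤ M i j)
    {u v : ι → R} (huv : u ≤ v) : M *ᵥ u ≤ M *ᵥ v :=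
  fun i => dotProduct_le_dotProduct_of_nonneg_left huv (hM i)

theorem dist_iterate_le_pow_mulVec [DecidableEq ι] {d : X → X → ι → R} {N : X → X}
    {A : Matrix ι ι R} (hA : ∀ i j, 0 ≤ A i j) (hN : ∀ x y, d (N x) (N y) ≤ A *ᵥ d x y)
    (x y : X) (k : ℕ) : d (N^[k] x) (N^[k] y) ≤ (A ^ k) *ᵥ d x y := by
  induction k with
  | zero => simp
  | succ k ih =>
    rw [Function.iterate_succ_apply', Function.iterate_succ_apply']
    calc d (N (N^[k] x)) (N (N^[k] y)) ≤ A *ᵥ d (N^[k] x) (N^[k] y) := hN _ _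
      _ ≤ A *ᵥ ((A ^ k) *ᵥ d x y) := mulVec_le_mulVec_of_nonneg hA ih
      _ = (A ^ (k + 1)) *ᵥ d x y := by rw [Matrix.mulVec_mulVec, pow_succ']

end Semiring

theorem one_sub_mul_mulVec_dist_fixedPoint_le [DecidableEq ι]
    [Ring R] [PartialOrder R] [IsOrderedRing R] {d : X → X → ι → R} {B A : Matrix ι ι R}
    (htri : ∀ u v w, d u w ≤ B *ᵥ (d u v + d v w)) (hB : ∀ i j, 0 ≤ B i j) {N : X → X}
    (hN : ∀ x y, d (N x) (N y) ≤ A *ᵥ d x y) {xs : X} (hxs : Function.IsFixedPt N xs) (x : X) :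
    (1 - B * A) *ᵥ d x xs ≤ B *ᵥ d x (N x) := by
  have hcontr : d (N x) xs ≤ A *ᵥ d x xs := by simpa only [hxs.eq] using hN x xs
  rw [Matrix.sub_mulVec, Matrix.one_mulVec, sub_le_iff_le_add]
  calc d x xs ≤ B *ᵥ (d x (N x) + d (N x) xs) := htri _ _ _
    _ ≤ B *ᵥ (d x (N x) + A *ᵥ d x xs) := mulVec_le_mulVec_of_nonneg hB (by gcongr)
    _ = B *ᵥ d x (N x) + (B * A) *ᵥ d x xs := by rw [Matrix.mulVec_add, Matrix.mulVec_mulVec]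

section CommRing

variable [DecidableEq ι] [CommRing R] [PartialOrder R] [IsOrderedRing R]

theorem le_inv_mulVec_of_mulVec_le {M : Matrix ι ι R} (hM : IsUnit M)
    (hM_inv : ∀ i j, 0 ≤ M⁻¹ i j) {v w : ι → R} (hvw : M *ᵥ v ≤ w) : v ≤ M⁻¹ *ᵥ w :=
  calc v = M⁻¹ *ᵥ (M *ᵥ v) := by
        rw [Matrix.mulVec_mulVec, Matrix.nonsing_inv_mul M ((Matrix.isUnit_iff_isUnit_det M).mp hM),
          Matrix.one_mulVec]
    _ ≤ M⁻¹ *ᵥ w := mulVec_le_mulVec_of_nonneg hM_inv hvw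

theorem error_estimate_positive_general {d : X → X → ι → R} {B A : Matrix ι ι R}
    (htri : ∀ u v w, d u w ≤ B *ᵥ (d u v + d v w)) (hB : ∀ i j, 0 ≤ B i j)
    {N : X → X} (hA : ∀ i j, 0 ≤ A i j) (hN : ∀ x y, d (N x) (N y) ≤ A *ᵥ d x y)
    {xs : X} (hxs : Function.IsFixedPt N xs) (x₀ : X) :
    (∀ k : ℕ, (1 - B * A) *ᵥ d (N^[k] x₀) xs ≤ (B * A ^ k) *ᵥ d x₀ (N x₀)) ∧
    (IsUnit (1 - B * A) ∧ (∀ i j, 0 ≤ (1 - B * A)⁻¹ i j) →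
      ∀ k : ℕ, d (N^[k] x₀) xs ≤ ((1 - B * A)⁻¹ * B * A ^ k) *ᵥ d x₀ (N x₀)) := by
  have hstep (k : ℕ) : d (N^[k] x₀) (N (N^[k] x₀)) ≤ (A ^ k) *ᵥ d x₀ (N x₀) := by
    simpa only [← Function.iterate_succ_apply, Function.iterate_succ_apply'] using
      dist_iterate_le_pow_mulVec hA hN x₀ (N x₀) k
  have hest (k : ℕ) : (1 - B * A) *ᵥ d (N^[k] x₀) xs ≤ (B * A ^ k) *ᵥ d x₀ (N x₀) :=
    calc (1 - B * A) *ᵥ d (N^[k] x₀) xs ≤ B *ᵥ d (N^[k] x₀) (N (N^[k] x₀)) :=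
          one_sub_mul_mulVec_dist_fixedPoint_le htri hB hN hxs _
      _ ≤ B *ᵥ ((A ^ k) *ᵥ d x₀ (N x₀)) := mulVec_le_mulVec_of_nonneg hB (hstep k)
      _ = (B * A ^ k) *ᵥ d x₀ (N x₀) := Matrix.mulVec_mulVec ..
  refine ⟨hest, fun ⟨hunit, hinv⟩ k => ?_⟩
  rw [mul_assoc, ← Matrix.mulVec_mulVec]
  exact le_inv_mulVec_of_mulVec_le hunit hinv (hest k)

end CommRing

end

theorem error_estimate_positive {X : Type*} {n : ℕ} (hn : 0 < n)
    (B : Matrix (Fin n) (Fin n) ℝ) (d : X → X → Fin n → ℝ)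
    (hmet : IsVectorBMetric B d) (hcomp : VComplete d)
    (hB : MatPos B)
    (N : X → X) (A : Matrix (Fin n) (Fin n) ℝ)
    (hA0 : MatPos A) (hA : MatConvZero A)
    (hcontr : ∀ x y : X, d (N x) (N y) ≤ A.mulVec (d x y))
    (xs : X) (hfix : N xs = xs) (huniq : ∀ y : X, N y = y → y = xs)
    (x₀ : X) :
    (∀ k : ℕ, (1 - B * A).mulVec (d (N^[k] x₀) xs) ≤ (B * A ^ k).mulVec (d x₀ (N x₀))) ∧
    (InvPos (1 - B * A) →
      ∀ k : ℕ, d (N^[k] x₀) xs ≤ ((1 - B * A)⁻¹ * B * A ^ k).mulVec (d x₀ (N x₀))) :=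
  error_estimate_positive_general hmet.2.2.2 hB hA0 hcontr hfix x₀
end

section
/- (Cantor intersection lemma in vector B-metric spaces.) Let (X,d) be a complete vector B-metric space, and let (F_k)_{k≥1} be a descending sequence (F_{k+1} ⊆ F_k) of nonempty closed subsets of X. Assume that for every ε > 0 there exists k₀ ≥ 1 such that d(x,y) ≤ ε e componentwise for all x,y ∈ F_k and all k ≥ k₀, where e = (1,1,…,1) ∈ ℝⁿ. Then the intersection ∩_{k=1}^∞ F_k contains exactly one element. -/
open Filter Matrix Topology

/-- A set is closed w.r.t. `d` if it contains limits of its convergent sequences. -/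
def VClosed {X : Type*} {n : ℕ} (d : X → X → Fin n → ℝ) (F : Set X) : Prop :=
  ∀ x : ℕ → X, (∀ k, x k ∈ F) → ∀ l, VConv d x l → l ∈ F

/-- The vector metric `d` is continuous. -/
def VContinuousD {X : Type*} {n : ℕ} (d : X → X → Fin n → ℝ) : Prop :=
  ∀ (x y : ℕ → X) (a b : X), VConv d x a → VConv d y b →
    Filter.Tendsto (fun k => d (x k) (y k)) Filter.atTop (nhds (d a b))

/-- `f` is (sequentially) lower semicontinuous w.r.t. `d`, componentwise. -/
def VLSC {X : Type*} {n : ℕ} (d : X → X → Fin n → ℝ) (f : X → Fin n → ℝ) : Prop :=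
  ∀ (x : ℕ → X) (l : X), VConv d x l →
    ∀ i, f l i ≤ Filter.liminf (fun k => f (x k) i) Filter.atTop

/-- Condition (H): on every nonempty closed set, `f` has almost-infimum points. -/
def CondH {X : Type*} {n : ℕ} (d : X → X → Fin n → ℝ) (f : X → Fin n → ℝ) : Prop :=
  ∀ F : Set X, F.Nonempty → VClosed d F → ∀ ε : ℝ, 0 < ε →
    ∃ x₀ ∈ F, ∀ x ∈ F, ∀ i, f x₀ i ≤ f x i + ε

/-!
One point chosen in each set gives a Cauchy sequence, because the diameters tend to zero. Its limit
lies in every `F k`, since a tail of the sequence stays in the closed set `F k`. Two common points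
are at distance at most `ε` in each component for every `ε > 0`, hence equal.
-/

/-- The `d`-diameters of the sets `F i` are arbitrarily small, componentwise. Stated through pairs
of points, as a supremum over an unbounded set of reals is `0`. For a descending sequence this says
that the diameters tend to zero. -/
def HasVanishingDiam {X ι : Type*} {n : ℕ} (d : X → X → Fin n → ℝ) (F : ι → Set X) : Prop :=
  ∀ ε : ℝ, 0 < ε → ∃ k, ∀ x ∈ F k, ∀ y ∈ F k, ∀ i, d x y i ≤ ε

theorem tendsto_pi_zero_of_eventually_le {α ι : Type*} [Finite ι] {l : Filter α} {f : α → ι → ℝ}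
    (hf : ∀ a, 0 ≤ f a) (hle : ∀ ε : ℝ, 0 < ε → ∀ᶠ a in l, ∀ i, f a i ≤ ε) :
    Tendsto f l (𝓝 0) := by
  have := Fintype.ofFinite ι
  refine Metric.nhds_basis_closedBall.tendsto_right_iff.2 fun ε hε => ?_
  filter_upwards [hle ε hε] with a ha
  rw [mem_closedBall_zero_iff, pi_norm_le_iff_of_nonneg hε.le]
  exact fun i => (Real.norm_of_nonneg (hf a i)).trans_le (ha i)

section

variable {X : Type*} {n : ℕ} {d : X → X → Fin n → ℝ}

theorem HasVanishingDiam.vCauchy {F : ℕ → Set X} (hdiam : HasVanishingDiam d F)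
    (hnonneg : ∀ u v, 0 ≤ d u v) (hF : Antitone F) {x : ℕ → X} (hx : ∀ k, x k ∈ F k) :
    VCauchy d x := by
  refine tendsto_pi_zero_of_eventually_le (fun p => hnonneg (x p.1) (x p.2)) fun ε hε => ?_
  obtain ⟨k, hk⟩ := hdiam ε hε
  filter_upwards [eventually_ge_atTop (k, k)] with p hp
  exact hk _ (hF hp.1 (hx p.1)) _ (hF hp.2 (hx p.2))

theorem VConv.mem_iInter_of_antitone {F : ℕ → Set X} {x : ℕ → X} {l : X} (hl : VConv d x l)
    (hcl : ∀ k, VClosed d (F k)) (hF : Antitone F) (hx : ∀ k, x k ∈ F k) : l ∈ ⋂ k, F k := by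
  refine Set.mem_iInter.2 fun k => ?_
  have tail_mem : ∀ j, x (j + k) ∈ F k := fun j => hF (Nat.le_add_left k j) (hx (j + k))
  exact hcl k (fun j => x (j + k)) tail_mem l (hl.comp (tendsto_add_atTop_nat k))

theorem HasVanishingDiam.subsingleton_iInter {ι : Type*} {F : ι → Set X}
    (hdiam : HasVanishingDiam d F) (hnonneg : ∀ u v, 0 ≤ d u v)
    (hsep : ∀ u v, d u v = 0 → u = v) : (⋂ k, F k).Subsingleton := by
  intro u hu v hv
  refine hsep u v (le_antisymm (fun i => ?_) (hnonneg u v))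
  refine le_of_forall_gt_imp_ge_of_dense fun ε hε => ?_
  obtain ⟨k, hk⟩ := hdiam ε hε
  exact hk u (Set.mem_iInter.1 hu k) v (Set.mem_iInter.1 hv k) i

theorem cantor_intersection_vector_general (hnonneg : ∀ u v, 0 ≤ d u v)
    (hsep : ∀ u v, d u v = 0 → u = v) (hcomp : VComplete d) {F : ℕ → Set X}
    (hne : ∀ k, (F k).Nonempty) (hcl : ∀ k, VClosed d (F k)) (hF : Antitone F)
    (hdiam : HasVanishingDiam d F) : ∃! z : X, z ∈ ⋂ k, F k := by
  choose x hx using hne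
  obtain ⟨l, hl⟩ := hcomp x (hdiam.vCauchy hnonneg hF hx)
  have l_mem : l ∈ ⋂ k, F k := hl.mem_iInter_of_antitone hcl hF hx
  exact ⟨l, l_mem, fun z hz => hdiam.subsingleton_iInter hnonneg hsep hz l_mem⟩

end

theorem cantor_intersection_vector {X : Type*} {n : ℕ} (hn : 0 < n)
    (B : Matrix (Fin n) (Fin n) ℝ) (d : X → X → Fin n → ℝ)
    (hmet : IsVectorBMetric B d) (hcomp : VComplete d)
    (F : ℕ → Set X)
    (hne : ∀ k, (F k).Nonempty)
    (hcl : ∀ k, VClosed d (F k))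
    (hdesc : ∀ k, F (k + 1) ⊆ F k)
    (hdiam : ∀ ε : ℝ, 0 < ε → ∃ k₀ : ℕ, ∀ k ≥ k₀,
      ∀ x ∈ F k, ∀ y ∈ F k, ∀ i, d x y i ≤ ε) :
    ∃! z : X, z ∈ ⋂ k, F k := by
  obtain ⟨hnonneg, hzero, -, -⟩ := hmet
  exact cantor_intersection_vector_general hnonneg (fun u v => (hzero u v).1) hcomp hne hcl
    (antitone_nat_of_succ_le hdesc) fun ε hε => (hdiam ε hε).imp fun k₀ hk => hk k₀ le_rfl
end

section
/- (Weak Ekeland variational principle in vector B-metric spaces.) Let (X,d) be a complete vector B-metric space such that d is continuous, and let f : X → ℝⁿ be lower semicontinuous, bounded from below, and satisfying condition (H). Then for every x₀ ∈ X there exist a sequence (x_k) ⊂ X and a point x* ∈ X such that: x_k → x* as k → ∞; f(x*) ≤ f(x₀) − d(x*, x₀); if x ∈ X satisfies f(x*) + d(x*, x_k) ≥ f(x) + d(x, x_k) (componentwise) for all k ≥ 0, then x = x*; and moreover, if x ∈ X satisfies f(x*) ≥ f(x) + B d(x*, x) + (B − I) d(x*, x_k) (componentwise) for all k ≥ 0,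 then x = x*. -/
open Filter Matrix Topology

/-!
Starting from `x₀`, choose `x (k + 1)` to be an `ε k`-minimizer of `f`, as given by condition (H),
on the intersection of the closed sets `{y | f y + d y (x j) ≤ f (x j)}`, `j ≤ k`. A point `y` of
the next intersection then satisfies `d y (x (k + 1)) ≤ f (x (k + 1)) - f y ≤ ε k`, so these sets
shrink to a single point, the limit of `x`, when `ε k → 0`. By the `B`-triangle inequality, the
hypothesis on `y` in the last clause of the theorem implies that of the clause before it.
-/

theorem tendsto_pi_zero_of_le {α ι : Type*} {l : Filter α} {u : α → ι → ℝ} {ε : α → ℝ}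
    (hu : ∀ a, 0 ≤ u a) (huε : ∀ a i, u a i ≤ ε a) (hε : Tendsto ε l (𝓝 0)) :
    Tendsto u l (𝓝 0) :=
  tendsto_pi_nhds.2 fun i => squeeze_zero (fun a => hu a i) (fun a => huε a i) hε

section VectorDistance

variable {X : Type*} {n : ℕ} {d : X → X → Fin n → ℝ} {f : X → Fin n → ℝ}

theorem vConv_const (hself : ∀ u, d u u = 0) (a : X) : VConv d (fun _ => a) a := by
  simp only [VConv, hself, tendsto_const_nhds]

theorem VContinuousD.vConv_unique (hd : VContinuousD d) (hself : ∀ u, d u u = 0)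
    (heq : ∀ u v, d u v = 0 → u = v) {x : ℕ → X} {a b : X} (ha : VConv d x a)
    (hb : VConv d x b) : a = b := by
  have hab : Tendsto (fun k => d (x k) (x k)) atTop (𝓝 (d a b)) := hd x x a b ha hb
  simp only [hself] at hab
  exact heq a b (tendsto_nhds_unique hab tendsto_const_nhds)

theorem vCauchy_of_forall_le (hnonneg : ∀ u v, 0 ≤ d u v) (hsymm : ∀ u v, d u v = d v u)
    {x : ℕ → X} {ε : ℕ → ℝ} (hx : ∀ p q, p ≤ q → ∀ i, d (x q) (x p) i ≤ ε p)
    (hε : Tendsto ε atTop (𝓝 0)) : VCauchy d x := by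
  have hle (p q : ℕ) (i : Fin n) : d (x p) (x q) i ≤ ε p + ε q := by
    have hε_nonneg (k : ℕ) : 0 ≤ ε k := (hnonneg _ _ i).trans (hx k k le_rfl i)
    rcases le_total p q with hpq | hqp
    · rw [hsymm]
      exact (hx p q hpq i).trans (le_add_of_nonneg_right (hε_nonneg q))
    · exact (hx q p hqp i).trans (le_add_of_nonneg_left (hε_nonneg p))
  have hsum : Tendsto (fun p : ℕ × ℕ => ε p.1 + ε p.2) atTop (𝓝 0) := by
    rw [← prod_atTop_atTop_eq, ← add_zero (0 : ℝ)]
    exact (hε.comp tendsto_fst).add (hε.comp tendsto_snd)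
  exact tendsto_pi_zero_of_le (fun _ => hnonneg _ _) (fun p => hle p.1 p.2) hsum

theorem VClosed.iInter {ι : Sort*} {s : ι → Set X} (hs : ∀ i, VClosed d (s i)) :
    VClosed d (⋂ i, s i) := fun x hx l hl =>
  Set.mem_iInter.2 fun i => hs i x (fun k => Set.mem_iInter.1 (hx k) i) l hl

theorem VClosed.mem_of_forall_ge {F : Set X} (hF : VClosed d F) {x : ℕ → X} {l : X}
    (hl : VConv d x l) {N : ℕ} (hx : ∀ k ≥ N, x k ∈ F) : l ∈ F :=
  hF (fun k => x (k + N)) (fun k => hx _ (Nat.le_add_left N k)) l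
    (hl.comp (tendsto_add_atTop_nat N))

-- The lower bound `c` keeps the real-valued `liminf` from taking its junk value.
theorem VLSC.le_of_tendsto (hf : VLSC d f) {x : ℕ → X} {l : X} (hl : VConv d x l)
    {c : Fin n → ℝ} (hc : ∀ k, c ≤ f (x k)) {g : ℕ → Fin n → ℝ} {b : Fin n → ℝ}
    (hg : Tendsto g atTop (𝓝 b)) (hfg : ∀ k, f (x k) ≤ g k) : f l ≤ b := fun i => by
  have hgi : Tendsto (fun k => g k i) atTop (𝓝 (b i)) := tendsto_pi_nhds.1 hg i
  calc f l i ≤ liminf (fun k => f (x k) i) atTop := hf x l hl i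
    _ ≤ liminf (fun k => g k i) atTop :=
      liminf_le_liminf (.of_forall fun k => hfg k i) (isBoundedUnder_of ⟨c i, fun k => hc k i⟩)
        hgi.isBoundedUnder_le.isCoboundedUnder_ge
    _ = b i := hgi.liminf_eq

/-- The points whose `f`-value lies below `f a` by at least their distance to `a`, that is, the
lower section at `a` of the relation on which Ekeland's principle is based. Because of the matrix
`B` in the triangle inequality this relation need not be transitive. -/
def ekelandSet (d : X → X → Fin n → ℝ) (f : X → Fin n → ℝ) (a : X) : Set X :=
  {y | f y + d y a ≤ f a}

theorem self_mem_ekelandSet (hself : ∀ u, d u u = 0) (a : X) : a ∈ ekelandSet d f a := by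
  simp only [ekelandSet, Set.mem_ofPred_eq, hself, add_zero, le_refl]

theorem vClosed_ekelandSet (hself : ∀ u, d u u = 0) (hd : VContinuousD d) (hf : VLSC d f)
    {c : Fin n → ℝ} (hc : ∀ x, c ≤ f x) (a : X) : VClosed d (ekelandSet d f a) := by
  intro x hx l hl
  have hlim : Tendsto (fun k => f a - d (x k) a) atTop (𝓝 (f a - d l a)) :=
    tendsto_const_nhds.sub (hd x _ l a hl (vConv_const hself a))
  exact le_sub_iff_add_le.1 <|
    hf.le_of_tendsto hl (fun k => hc (x k)) hlim fun k => le_sub_iff_add_le.2 (hx k)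

/-- The sequences built in the proof of Ekeland's principle: each new term is an `ε k`-minimizer
of `f`, in every component, on the intersection of the Ekeland sets of all terms before it. The
intersection makes up for the missing transitivity. -/
structure IsEkelandSeq (d : X → X → Fin n → ℝ) (f : X → Fin n → ℝ) (ε : ℕ → ℝ)
    (x : ℕ → X) : Prop where
  succ_mem : ∀ k, x (k + 1) ∈ Set.dissipate (fun j => ekelandSet d f (x j)) k
  le_add : ∀ k, ∀ y ∈ Set.dissipate (fun j => ekelandSet d f (x j)) k,
    ∀ i, f (x (k + 1)) i ≤ f y i + ε k

theorem exists_isEkelandSeq (hself : ∀ u, d u u = 0)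
    (hclosed : ∀ a, VClosed d (ekelandSet d f a)) (hH : CondH d f) {ε : ℕ → ℝ}
    (hε : ∀ k, 0 < ε k) (x₀ : X) : ∃ x : ℕ → X, x 0 = x₀ ∧ IsEkelandSeq d f ε x := by
  have : Nonempty X := ⟨x₀⟩
  choose! m hm_mem hm_le using hH
  let S : ℕ → Set X :=
    Nat.rec (ekelandSet d f x₀) fun k F => F ∩ ekelandSet d f (m F (ε k))
  let x : ℕ → X := fun k => k.casesOn x₀ fun j => m (S j) (ε j)
  have hS (k : ℕ) : Set.dissipate (fun j => ekelandSet d f (x j)) k = S k := by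
    induction k with
    | zero => exact Set.dissipate_zero_nat _
    | succ k ih => rw [Set.dissipate_succ, ih]
  have hS_closed (k : ℕ) : VClosed d (S k) :=
    hS k ▸ VClosed.iInter fun j => VClosed.iInter fun _ => hclosed (x j)
  have hS_nonempty (k : ℕ) : (S k).Nonempty := by
    induction k with
    | zero => exact ⟨x₀, self_mem_ekelandSet hself x₀⟩
    | succ k ih =>
      exact ⟨m (S k) (ε k), hm_mem _ ih (hS_closed k) _ (hε k), self_mem_ekelandSet hself _⟩
  refine ⟨x, rfl, fun k => ?_, fun k => ?_⟩ <;> rw [hS k]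
  · exact hm_mem _ (hS_nonempty k) (hS_closed k) _ (hε k)
  · exact hm_le _ (hS_nonempty k) (hS_closed k) _ (hε k)

namespace IsEkelandSeq

variable {ε : ℕ → ℝ} {x : ℕ → X}

theorem mem_ekelandSet (hx : IsEkelandSeq d f ε x) (hself : ∀ u, d u u = 0) {j k : ℕ}
    (hjk : j ≤ k) : x k ∈ ekelandSet d f (x j) := by
  rcases hjk.eq_or_lt with rfl | hlt
  · exact self_mem_ekelandSet hself _
  · obtain ⟨p, rfl⟩ := Nat.exists_eq_add_one_of_ne_zero (Nat.ne_zero_of_lt hlt)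
    exact Set.mem_dissipate.1 (hx.succ_mem p) j (Nat.le_of_lt_succ hlt)

theorem dist_le (hx : IsEkelandSeq d f ε x) {k : ℕ} {y : X}
    (hy : ∀ j ≤ k + 1, y ∈ ekelandSet d f (x j)) (i : Fin n) : d y (x (k + 1)) i ≤ ε k := by
  have hbelow : f y i + d y (x (k + 1)) i ≤ f (x (k + 1)) i := hy (k + 1) le_rfl i
  have hmin : f (x (k + 1)) i ≤ f y i + ε k :=
    hx.le_add k y (Set.mem_dissipate.2 fun j hj => hy j (hj.trans k.le_succ)) i
  linarith

theorem exists_vConv (hx : IsEkelandSeq d f ε x) (hself : ∀ u, d u u = 0)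
    (hnonneg : ∀ u v, 0 ≤ d u v) (hsymm : ∀ u v, d u v = d v u) (hcomp : VComplete d)
    (hε : Tendsto ε atTop (𝓝 0)) : ∃ l, VConv d x l := by
  have hcauchy : VCauchy d fun k => x (k + 1) :=
    vCauchy_of_forall_le hnonneg hsymm
      (fun _ _ hpq => hx.dist_le fun _ hj =>
        hx.mem_ekelandSet hself (hj.trans (Nat.succ_le_succ hpq))) hε
  obtain ⟨l, hl⟩ := hcomp _ hcauchy
  exact ⟨l, (tendsto_add_atTop_iff_nat (f := fun k => d (x k) l) 1).1 hl⟩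

theorem vConv_of_forall_mem (hx : IsEkelandSeq d f ε x) (hnonneg : ∀ u v, 0 ≤ d u v)
    (hsymm : ∀ u v, d u v = d v u) (hε : Tendsto ε atTop (𝓝 0)) {y : X}
    (hy : ∀ k, y ∈ ekelandSet d f (x k)) : VConv d x y := by
  refine (tendsto_add_atTop_iff_nat 1).1 (tendsto_pi_zero_of_le (fun _ => hnonneg _ _) ?_ hε)
  intro k i
  rw [hsymm]
  exact hx.dist_le (fun j _ => hy j) i

end IsEkelandSeq

theorem IsVectorBMetric.le_mulVec_add_sub_one_mulVec_add
    {B : Matrix (Fin n) (Fin n) ℝ} (hd : IsVectorBMetric B d) (y z a : X) :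
    d y a ≤ B *ᵥ d z y + (B - 1) *ᵥ d z a + d z a := by
  obtain ⟨-, -, hsymm, htri⟩ := hd
  calc d y a ≤ B *ᵥ (d y z + d z a) := htri y z a
    _ = B *ᵥ d z y + (B - 1) *ᵥ d z a + d z a := by
      rw [hsymm y z, mulVec_add, sub_mulVec, one_mulVec, add_assoc, sub_add_cancel]

end VectorDistance

theorem weak_ekeland_vector {X : Type*} {n : ℕ} (hn : 0 < n)
    (B : Matrix (Fin n) (Fin n) ℝ) (d : X → X → Fin n → ℝ)
    (hmet : IsVectorBMetric B d) (hcomp : VComplete d)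
    (hdcont : VContinuousD d)
    (f : X → Fin n → ℝ) (hlsc : VLSC d f)
    (hbdd : ∃ c : Fin n → ℝ, ∀ x : X, c ≤ f x)
    (hH : CondH d f)
    (x₀ : X) :
    ∃ (x : ℕ → X) (xs : X),
      VConv d x xs ∧
      f xs ≤ f x₀ - d xs x₀ ∧
      (∀ y : X, (∀ k : ℕ, f y + d y (x k) ≤ f xs + d xs (x k)) → y = xs) ∧
      (∀ y : X,
        (∀ k : ℕ, f y + B.mulVec (d xs y) + (B - 1).mulVec (d xs (x k)) ≤ f xs) →
        y = xs) := by
  have ⟨hnonneg, heq, hsymm, _⟩ := hmet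
  have hself (u : X) : d u u = 0 := (heq u u).2 rfl
  obtain ⟨c, hc⟩ := hbdd
  have hclosed := vClosed_ekelandSet hself hdcont hlsc hc
  have hε_pos (k : ℕ) : (0 : ℝ) < 1 / ((k : ℝ) + 1) := Nat.one_div_pos_of_nat
  have hε : Tendsto (fun k : ℕ => 1 / ((k : ℝ) + 1)) atTop (𝓝 0) :=
    tendsto_one_div_add_atTop_nhds_zero_nat
  obtain ⟨x, rfl, hx⟩ := exists_isEkelandSeq hself hclosed hH hε_pos x₀
  obtain ⟨xs, hxs⟩ := hx.exists_vConv hself hnonneg hsymm hcomp hε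
  have hmem (k : ℕ) : f xs + d xs (x k) ≤ f (x k) :=
    (hclosed (x k)).mem_of_forall_ge hxs fun _ hj => hx.mem_ekelandSet hself hj
  have hunique (y : X) (hy : ∀ k, f y + d y (x k) ≤ f xs + d xs (x k)) : y = xs :=
    hdcont.vConv_unique hself (fun u v => (heq u v).1)
      (hx.vConv_of_forall_mem hnonneg hsymm hε fun k => (hy k).trans (hmem k)) hxs
  refine ⟨x, xs, hxs, le_sub_iff_add_le.2 (hmem 0), hunique, fun y hy => hunique y fun k => ?_⟩
  calc f y + d y (x k)
      ≤ f y + (B *ᵥ d xs y + (B - 1) *ᵥ d xs (x k) + d xs (x k)) :=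
        add_le_add_right (hmet.le_mulVec_add_sub_one_mulVec_add y xs (x k)) _
    _ = f y + B *ᵥ d xs y + (B - 1) *ᵥ d xs (x k) + d xs (x k) := by simp only [add_assoc]
    _ ≤ f xs + d xs (x k) := add_le_add_left (hy k) _
end

section
/- (Weak Ekeland variational principle in b-metric spaces.) Let (X,ρ) be a complete b-metric space (b ≥ 1) such that ρ is continuous, and let f : X → ℝ be a lower semicontinuous function bounded from below. Then for every x₀ ∈ X there exist a sequence (x_k) ⊂ X and a point x* ∈ X such that: x_k → x* as k → ∞; f(x*) ≤ f(x₀) − ρ(x*, x₀); for each x ∈ X with x ≠ x* there exists an index k = k(x) with f(x*) + ρ(x*, x_k) < f(x) + ρ(x, x_k); and moreover, for each x ∈ X with x ≠ x* there exists an index k = k(x) with f(x*) < f(x) + b ρ(x*, x) + (b − 1) ρ(x*, x_k). -/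
open Filter Topology

/-- `ρ` is a `b`-metric on `X`. -/
def IsBMetric {X : Type*} (b : ℝ) (ρ : X → X → ℝ) : Prop :=
  (∀ x y, 0 ≤ ρ x y) ∧ (∀ x y, ρ x y = 0 ↔ x = y) ∧
  (∀ x y, ρ x y = ρ y x) ∧
  (∀ x y z, ρ x z ≤ b * (ρ x y + ρ y z))

/-- Convergence of a sequence with respect to `ρ`. -/
def BConv {X : Type*} (ρ : X → X → ℝ) (x : ℕ → X) (l : X) : Prop :=
  Filter.Tendsto (fun k => ρ (x k) l) Filter.atTop (nhds 0)

/-- Cauchy sequence with respect to `ρ`. -/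
def BCauchy {X : Type*} (ρ : X → X → ℝ) (x : ℕ → X) : Prop :=
  Filter.Tendsto (fun p : ℕ × ℕ => ρ (x p.1) (x p.2)) Filter.atTop (nhds 0)

/-- Completeness: every Cauchy sequence converges. -/
def BComplete {X : Type*} (ρ : X → X → ℝ) : Prop :=
  ∀ x : ℕ → X, BCauchy ρ x → ∃ l, BConv ρ x l

/-- The `b`-metric `ρ` is continuous. -/
def BContinuousRho {X : Type*} (ρ : X → X → ℝ) : Prop :=
  ∀ (x y : ℕ → X) (a c : X), BConv ρ x a → BConv ρ y c →
    Filter.Tendsto (fun k => ρ (x k) (y k)) Filter.atTop (nhds (ρ a c))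

/-- `f` is (sequentially) lower semicontinuous w.r.t. `ρ`. -/
def BLSC {X : Type*} (ρ : X → X → ℝ) (f : X → ℝ) : Prop :=
  ∀ (x : ℕ → X) (l : X), BConv ρ x l →
    f l ≤ Filter.liminf (fun k => f (x k)) Filter.atTop

/-!
Write `y ∈ T x` for `f y + ρ y x ≤ f x`. This relation need not be transitive when `1 < b`, so each
new point `xₙ₊₁` is chosen in the intersection of all `T x₀, …, T xₙ`, almost minimizing `f` there.
Then `ρ xₙ xₘ ≤ f xₘ - f xₙ` for `m ≤ n`, so `x` is Cauchy because the decreasing sequence `f xₙ`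
converges. Its limit belongs to every `T xₙ`, by semicontinuity, and it is the only such point: if
`y` is another, almost minimality forces `f xₙ → f y`, and `ρ y xₙ ≤ f xₙ - f y` then shows that
`xₙ → y`.
-/

section Semimetric

/-- A semimetric: a `b`-metric without any form of the triangle inequality. The Ekeland
sequence is constructed in this setting. -/
structure IsSemimetric {X : Type*} (ρ : X → X → ℝ) : Prop where
  nonneg : ∀ x y, 0 ≤ ρ x y
  eq_zero_iff : ∀ x y, ρ x y = 0 ↔ x = y
  symm : ∀ x y, ρ x y = ρ y x

variable {X : Type*} {ρ : X → X → ℝ} {f : X → ℝ} {x : ℕ → X} {l l' p : X}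

theorem IsSemimetric.self_eq_zero (hρ : IsSemimetric ρ) (a : X) : ρ a a = 0 :=
  (hρ.eq_zero_iff a a).2 rfl

theorem IsBMetric.isSemimetric {b : ℝ} (h : IsBMetric b ρ) : IsSemimetric ρ :=
  ⟨h.1, h.2.1, h.2.2.1⟩

theorem BContinuousRho.blsc_left (hcont : BContinuousRho ρ) (hself : ∀ a, ρ a a = 0) (y : X) :
    BLSC ρ fun z => ρ z y := fun x l hx =>
  have hconst : BConv ρ (fun _ => y) y := by simp [BConv, hself]
  (hcont x (fun _ => y) l y hx hconst).liminf_eq.ge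

theorem BLSC.le_of_tendsto (hlsc : BLSC ρ f) (hbdd : BddBelow (Set.range f)) (hx : BConv ρ x l)
    {u : ℕ → ℝ} {a : ℝ} (hu : Tendsto u atTop (𝓝 a)) (hle : ∀ᶠ k in atTop, f (x k) ≤ u k) :
    f l ≤ a := by
  obtain ⟨c, hc⟩ := hbdd
  calc f l ≤ liminf (fun k => f (x k)) atTop := hlsc x l hx
    _ ≤ liminf u atTop :=
      liminf_le_liminf hle (isBoundedUnder_of ⟨c, fun k => hc ⟨x k, rfl⟩⟩)
        hu.isBoundedUnder_le.isCoboundedUnder_ge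
    _ = a := hu.liminf_eq

theorem IsSemimetric.bddBelow_range_left (hρ : IsSemimetric ρ) (y : X) :
    BddBelow (Set.range fun z => ρ z y) :=
  ⟨0, Set.forall_mem_range.2 fun z => hρ.nonneg z y⟩

theorem IsSemimetric.bConv_unique (hρ : IsSemimetric ρ) (hρlsc : ∀ y, BLSC ρ fun z => ρ z y)
    (hx : BConv ρ x l) (hx' : BConv ρ x l') : l = l' := by
  have hle : ρ l l' ≤ 0 :=
    (hρlsc l').le_of_tendsto (hρ.bddBelow_range_left l') hx hx' (.of_forall fun _ => le_rfl)
  exact (hρ.eq_zero_iff l l').1 (hle.antisymm (hρ.nonneg l l'))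

/-- The points `y` whose decrease `f x - f y` is at least `ρ y x`: the sets `T x` that are
intersected in the construction of the Ekeland sequence. -/
def ekelandSlice (ρ : X → X → ℝ) (f : X → ℝ) (x : X) : Set X :=
  {y | f y + ρ y x ≤ f x}

theorem IsSemimetric.self_mem_ekelandSlice (hρ : IsSemimetric ρ) (a : X) :
    a ∈ ekelandSlice ρ f a := by
  simp [ekelandSlice, hρ.self_eq_zero]

theorem dist_le_sub_of_mem_ekelandSlice {y : X} (hy : y ∈ ekelandSlice ρ f p) :
    ρ y p ≤ f p - f y :=
  le_sub_iff_add_le'.2 hy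

theorem IsSemimetric.le_of_mem_ekelandSlice (hρ : IsSemimetric ρ) {y : X}
    (hy : y ∈ ekelandSlice ρ f p) : f y ≤ f p :=
  sub_nonneg.1 ((hρ.nonneg y p).trans (dist_le_sub_of_mem_ekelandSlice hy))

theorem IsSemimetric.bConv_mem_ekelandSlice (hρ : IsSemimetric ρ)
    (hρlsc : ∀ y, BLSC ρ fun z => ρ z y) (hlsc : BLSC ρ f) (hbdd : BddBelow (Set.range f))
    (hx : BConv ρ x l) {a : ℝ} (ha : Tendsto (fun k => f (x k)) atTop (𝓝 a))
    (hmem : ∀ᶠ k in atTop, x k ∈ ekelandSlice ρ f p) : l ∈ ekelandSlice ρ f p := by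
  have hf : f l ≤ a := hlsc.le_of_tendsto hbdd hx ha (.of_forall fun _ => le_rfl)
  have hdist : ρ l p ≤ f p - a :=
    (hρlsc p).le_of_tendsto (hρ.bddBelow_range_left p) hx (ha.const_sub (f p))
      (hmem.mono fun _ => dist_le_sub_of_mem_ekelandSlice)
  exact (add_le_add hf hdist).trans_eq (add_sub_cancel a (f p))

theorem IsSemimetric.bCauchy_of_mem_ekelandSlice (hρ : IsSemimetric ρ)
    (hmem : ∀ m n, m ≤ n → x n ∈ ekelandSlice ρ f (x m)) (hf : CauchySeq fun k => f (x k)) :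
    BCauchy ρ x := by
  refine squeeze_zero (fun _ => hρ.nonneg _ _) (fun ⟨m, n⟩ => ?_)
    (cauchySeq_iff_tendsto_dist_atTop_0.1 hf)
  rcases le_total m n with hmn | hnm
  · rw [hρ.symm]
    exact (dist_le_sub_of_mem_ekelandSlice (hmem m n hmn)).trans (le_abs_self _)
  · rw [dist_comm]
    exact (dist_le_sub_of_mem_ekelandSlice (hmem n m hnm)).trans (le_abs_self _)

theorem IsSemimetric.bConv_of_forall_mem_ekelandSlice (hρ : IsSemimetric ρ)
    (hmem : ∀ k, l ∈ ekelandSlice ρ f (x k)) (hf : Tendsto (fun k => f (x k)) atTop (𝓝 (f l))) :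
    BConv ρ x l := by
  refine squeeze_zero (fun _ => hρ.nonneg _ _) (fun k => ?_) (tendsto_sub_nhds_zero_iff.2 hf)
  rw [hρ.symm]
  exact dist_le_sub_of_mem_ekelandSlice (hmem k)

end Semimetric

section GreedySeq

variable {X : Type*} {f : X → ℝ} {T : X → Set X}

theorem exists_mem_forall_le_add {S : Set X} (hS : S.Nonempty) (hbdd : BddBelow (f '' S)) {ε : ℝ}
    (hε : 0 < ε) : ∃ a ∈ S, ∀ y ∈ S, f a ≤ f y + ε := by
  obtain ⟨_, ⟨a, ha, rfl⟩, hlt⟩ :=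
    exists_lt_of_csInf_lt (hS.image f) (lt_add_of_pos_right (sInf (f '' S)) hε)
  refine ⟨a, ha, fun y hy => hlt.le.trans ?_⟩
  gcongr
  exact csInf_le hbdd ⟨y, hy, rfl⟩

/-- The sequence starting at `x₀` whose term of index `n + 1` is chosen by `pick n` from the
intersection of the sets `T` attached to all earlier terms. -/
def greedySeq (T : X → Set X) (pick : ℕ → Set X → X) (x₀ : X) : ℕ → X
  | 0 => x₀
  | n + 1 => pick n {y | ∀ m < n + 1, y ∈ T (greedySeq T pick x₀ m)}

theorem greedySeq_succ (pick : ℕ → Set X → X) (x₀ : X) (n : ℕ) :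
    greedySeq T pick x₀ (n + 1) = pick n {y | ∀ m < n + 1, y ∈ T (greedySeq T pick x₀ m)} := by
  rw [greedySeq]

theorem greedySeq_mem (hT : ∀ a, a ∈ T a) {pick : ℕ → Set X → X}
    (hpick : ∀ n S, S.Nonempty → pick n S ∈ S) (x₀ : X) (m n : ℕ) (hmn : m ≤ n) :
    greedySeq T pick x₀ n ∈ T (greedySeq T pick x₀ m) := by
  induction n generalizing m with
  | zero => exact Nat.le_zero.1 hmn ▸ hT _
  | succ n ih =>
    rcases hmn.eq_or_lt with rfl | hlt
    · exact hT _
    · have hne : {y | ∀ k < n + 1, y ∈ T (greedySeq T pick x₀ k)}.Nonempty :=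
        ⟨greedySeq T pick x₀ n, fun k hk => ih k (Nat.le_of_lt_succ hk)⟩
      rw [greedySeq_succ]
      exact hpick n _ hne m hlt

theorem exists_seq_tendsto_of_forall_mem (hT : ∀ a, a ∈ T a) (hle : ∀ a, ∀ y ∈ T a, f y ≤ f a)
    (hbdd : BddBelow (Set.range f)) (x₀ : X) :
    ∃ x : ℕ → X, x 0 = x₀ ∧ (∀ m n, m ≤ n → x n ∈ T (x m)) ∧
      ∀ y, (∀ k, y ∈ T (x k)) → Tendsto (fun k => f (x k)) atTop (𝓝 (f y)) := by
  have hex (n : ℕ) (S : Set X) :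
      ∃ a, S.Nonempty → a ∈ S ∧ ∀ y ∈ S, f a ≤ f y + 1 / ((n : ℝ) + 1) := by
    rcases S.eq_empty_or_nonempty with rfl | hS
    · exact ⟨x₀, fun h => absurd h Set.not_nonempty_empty⟩
    · obtain ⟨a, ha⟩ := exists_mem_forall_le_add hS (hbdd.mono (Set.image_subset_range f S))
        (Nat.one_div_pos_of_nat (n := n))
      exact ⟨a, fun _ => ha⟩
  choose pick hpick using hex
  refine ⟨greedySeq T pick x₀, by rw [greedySeq],
    greedySeq_mem hT (fun n S hS => (hpick n S hS).1) x₀, fun y hy => ?_⟩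
  have hnear (n : ℕ) : f (greedySeq T pick x₀ (n + 1)) ≤ f y + 1 / ((n : ℝ) + 1) := by
    have hy_mem : y ∈ {z | ∀ m < n + 1, z ∈ T (greedySeq T pick x₀ m)} := fun m _ => hy m
    rw [greedySeq_succ]
    exact (hpick n _ ⟨y, hy_mem⟩).2 y hy_mem
  have hlim : Tendsto (fun n : ℕ => f y + 1 / ((n : ℝ) + 1)) atTop (𝓝 (f y)) := by
    simpa using tendsto_one_div_add_atTop_nhds_zero_nat.const_add (f y)
  exact (tendsto_add_atTop_iff_nat 1).1
    (tendsto_of_tendsto_of_tendsto_of_le_of_le tendsto_const_nhds hlim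
      (fun n => hle _ y (hy (n + 1))) hnear)

end GreedySeq

theorem IsSemimetric.exists_weak_ekeland {X : Type*} {ρ : X → X → ℝ} (hρ : IsSemimetric ρ)
    (hcomp : BComplete ρ) (hρlsc : ∀ y, BLSC ρ fun z => ρ z y) {f : X → ℝ} (hlsc : BLSC ρ f)
    (hbdd : BddBelow (Set.range f)) (x₀ : X) :
    ∃ (x : ℕ → X) (xs : X), BConv ρ x xs ∧ f xs ≤ f x₀ - ρ xs x₀ ∧
      ∀ y, y ≠ xs → ∃ k, f xs + ρ xs (x k) < f y + ρ y (x k) := by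
  obtain ⟨x, rfl, hmem, hlim⟩ := exists_seq_tendsto_of_forall_mem
    (T := ekelandSlice ρ f) hρ.self_mem_ekelandSlice (fun _ _ => hρ.le_of_mem_ekelandSlice) hbdd x₀
  have hanti : Antitone fun k => f (x k) := fun m n hmn => hρ.le_of_mem_ekelandSlice (hmem m n hmn)
  have hf := tendsto_atTop_ciInf hanti (hbdd.mono (Set.range_comp_subset_range x f))
  obtain ⟨xs, hxs⟩ := hcomp x (hρ.bCauchy_of_mem_ekelandSlice hmem hf.cauchySeq)
  have hxs_mem (n : ℕ) : xs ∈ ekelandSlice ρ f (x n) :=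
    hρ.bConv_mem_ekelandSlice hρlsc hlsc hbdd hxs hf ((eventually_ge_atTop n).mono (hmem n))
  refine ⟨x, xs, hxs, le_sub_iff_add_le.2 (hxs_mem 0), fun y hy => ?_⟩
  by_contra! hle
  have hy_mem (k : ℕ) : y ∈ ekelandSlice ρ f (x k) := (hle k).trans (hxs_mem k)
  exact hy (hρ.bConv_unique hρlsc
    (hρ.bConv_of_forall_mem_ekelandSlice hy_mem (hlim y hy_mem)) hxs)

theorem IsBMetric.lt_add_mul_of_add_lt_add {X : Type*} {b : ℝ} {ρ : X → X → ℝ}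
    (hmet : IsBMetric b ρ) {f : X → ℝ} {xs y z : X} (hlt : f xs + ρ xs z < f y + ρ y z) :
    f xs < f y + b * ρ xs y + (b - 1) * ρ xs z := by
  have htri : ρ y z ≤ b * (ρ xs y + ρ xs z) := hmet.isSemimetric.symm xs y ▸ hmet.2.2.2 y xs z
  linarith

theorem weak_ekeland_bmetric_general {X : Type*}
    (b : ℝ) (ρ : X → X → ℝ)
    (hmet : IsBMetric b ρ) (hcomp : BComplete ρ)
    (hρlsc : ∀ y, BLSC ρ fun z => ρ z y)
    (f : X → ℝ) (hlsc : BLSC ρ f)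
    (hbdd : ∃ c : ℝ, ∀ x : X, c ≤ f x)
    (x₀ : X) :
    ∃ (x : ℕ → X) (xs : X),
      BConv ρ x xs ∧
      f xs ≤ f x₀ - ρ xs x₀ ∧
      (∀ y : X, y ≠ xs → ∃ k : ℕ, f xs + ρ xs (x k) < f y + ρ y (x k)) ∧
      (∀ y : X, y ≠ xs →
        ∃ k : ℕ, f xs < f y + b * ρ xs y + (b - 1) * ρ xs (x k)) := by
  obtain ⟨c, hc⟩ := hbdd
  obtain ⟨x, xs, hxs, hle, hlt⟩ := hmet.isSemimetric.exists_weak_ekeland hcomp hρlsc hlsc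
    ⟨c, Set.forall_mem_range.2 hc⟩ x₀
  exact ⟨x, xs, hxs, hle, hlt, fun y hy => (hlt y hy).imp fun _ => hmet.lt_add_mul_of_add_lt_add⟩

theorem weak_ekeland_bmetric {X : Type*}
    (b : ℝ) (hb : 1 ≤ b) (ρ : X → X → ℝ)
    (hmet : IsBMetric b ρ) (hcomp : BComplete ρ)
    (hρcont : BContinuousRho ρ)
    (f : X → ℝ) (hlsc : BLSC ρ f)
    (hbdd : ∃ c : ℝ, ∀ x : X, c ≤ f x)
    (x₀ : X) :
    ∃ (x : ℕ → X) (xs : X),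
      BConv ρ x xs ∧
      f xs ≤ f x₀ - ρ xs x₀ ∧
      (∀ y : X, y ≠ xs → ∃ k : ℕ, f xs + ρ xs (x k) < f y + ρ y (x k)) ∧
      (∀ y : X, y ≠ xs →
        ∃ k : ℕ, f xs < f y + b * ρ xs y + (b - 1) * ρ xs (x k)) := by
  exact weak_ekeland_bmetric_general b ρ hmet hcomp
    (hρcont.blsc_left hmet.isSemimetric.self_eq_zero) f hlsc hbdd x₀
end

section
/- Let d = (d₁,…,d_n) be a vector B-metric on a set X with a positive matrix B = (b_ij). Then: ρ₁(x,y) := Σ_{i=1}^n d_i(x,y) is a b₁-metric on X with b₁ := Σ_{i=1}^n max_{1≤j≤n} b_ij; ρ_∞(x,y) := max_{1≤i≤n} d_i(x,y) is a b_∞-metric on X with b_∞ := max_{1≤i≤n} Σ_{j=1}^n b_ij; and ρ₂(x,y) := (Σ_{i=1}^n d_i(x,y)²)^{1/2} is a b₂-metric on X with b₂ := (Σ_{i,j=1}^n b_ij²)^{1/2}. -/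
open Filter Matrix Topology

/-- A way of measuring nonnegative vectors by a single number: `N` is definite, monotone and
subadditive on the nonnegative cone. Its values off the cone are unconstrained, so that `∑ i, v i`
and `⨆ i, v i` qualify without absolute values, and homogeneity is not demanded. -/
structure IsScalarization {E : Type*} [AddZeroClass E] [Preorder E] (N : E → ℝ) : Prop where
  eq_zero_iff : ∀ {v}, 0 ≤ v → (N v = 0 ↔ v = 0)
  monotoneOn : MonotoneOn N (Set.Ici 0)
  add_le : ∀ {v w}, 0 ≤ v → 0 ≤ w → N (v + w) ≤ N v + N w

theorem IsScalarization.nonneg {E : Type*} [AddZeroClass E] [Preorder E] {N : E → ℝ}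
    (hN : IsScalarization N) {v : E} (hv : 0 ≤ v) : 0 ≤ N v := by
  simpa only [(hN.eq_zero_iff le_rfl).2 rfl] using hN.monotoneOn Set.self_mem_Ici hv hv

theorem IsVectorBMetric.isBMetric_comp {X : Type*} {n : ℕ} {B : Matrix (Fin n) (Fin n) ℝ}
    {d : X → X → Fin n → ℝ} (hd : IsVectorBMetric B d) {N : (Fin n → ℝ) → ℝ}
    (hN : IsScalarization N) {b : ℝ} (hb : 0 ≤ b)
    (hBN : ∀ v, 0 ≤ v → N (B *ᵥ v) ≤ b * N v) :
    IsBMetric b (fun x y => N (d x y)) := by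
  obtain ⟨d_nonneg, d_eq_zero, d_comm, d_triangle⟩ := hd
  refine ⟨fun x y => hN.nonneg (d_nonneg x y),
    fun x y => (hN.eq_zero_iff (d_nonneg x y)).trans (d_eq_zero x y),
    fun x y => congrArg N (d_comm x y), fun x y z => ?_⟩
  have mulVec_nonneg : 0 ≤ B *ᵥ (d x y + d y z) := (d_nonneg x z).trans (d_triangle x y z)
  calc N (d x z) ≤ N (B *ᵥ (d x y + d y z)) :=
        hN.monotoneOn (d_nonneg x z) mulVec_nonneg (d_triangle x y z)
    _ ≤ b * N (d x y + d y z) := hBN _ (add_nonneg (d_nonneg x y) (d_nonneg y z))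
    _ ≤ b * (N (d x y) + N (d y z)) :=
        mul_le_mul_of_nonneg_left (hN.add_le (d_nonneg x y) (d_nonneg y z)) hb

section Scalarizations

variable {ι : Type*}

theorem isScalarization_sum [Fintype ι] : IsScalarization fun v : ι → ℝ => ∑ i, v i where
  eq_zero_iff hv := Fintype.sum_eq_zero_iff_of_nonneg hv
  monotoneOn _ _ _ _ hvw := Finset.sum_le_sum fun i _ => hvw i
  add_le _ _ := Finset.sum_add_distrib.le

theorem isScalarization_iSup [Finite ι] : IsScalarization fun v : ι → ℝ => ⨆ i, v i where
  eq_zero_iff {v} hv := by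
    refine ⟨fun h => ?_, fun h => by simp only [h, Pi.zero_apply, Real.iSup_const_zero]⟩
    exact le_antisymm (fun i => (Finite.le_ciSup v i).trans_eq h) hv
  monotoneOn _ _ _ _ hvw := ciSup_mono (Set.finite_range _).bddAbove hvw
  add_le {v w} hv hw := Real.iSup_le
    (fun i => add_le_add (Finite.le_ciSup v i) (Finite.le_ciSup w i))
    (add_nonneg (Real.iSup_nonneg hv) (Real.iSup_nonneg hw))

theorem norm_toLp_two_eq_sqrt_sum_sq [Fintype ι] (v : ι → ℝ) :
    ‖WithLp.toLp 2 v‖ = √(∑ i, v i ^ 2) := by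
  simp only [EuclideanSpace.norm_eq, Real.norm_eq_abs, sq_abs]

theorem isScalarization_sqrt_sum_sq [Fintype ι] :
    IsScalarization fun v : ι → ℝ => √(∑ i, v i ^ 2) where
  eq_zero_iff {v} _ := by
    rw [← norm_toLp_two_eq_sqrt_sum_sq, norm_eq_zero, WithLp.toLp_eq_zero]
  monotoneOn _ hv _ _ hvw :=
    Real.sqrt_le_sqrt (Finset.sum_le_sum fun i _ => pow_le_pow_left₀ (hv i) (hvw i) 2)
  add_le {v w} _ _ := by
    simpa only [← norm_toLp_two_eq_sqrt_sum_sq, WithLp.toLp_add] using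
      norm_add_le (WithLp.toLp 2 v) (WithLp.toLp 2 w)

end Scalarizations

section MulVecBounds

variable {m n : Type*} [Fintype n]

theorem sum_mulVec_le [Fintype m] (B : Matrix m n ℝ) {v : n → ℝ} (hv : 0 ≤ v) :
    ∑ i, (B *ᵥ v) i ≤ (∑ i, ⨆ j, B i j) * ∑ j, v j := by
  rw [Finset.sum_mul]
  refine Finset.sum_le_sum fun i _ => ?_
  calc ∑ j, B i j * v j ≤ ∑ j, (⨆ k, B i k) * v j := by
        gcongr with j
        · exact hv j
        · exact Finite.le_ciSup (B i) j
    _ = (⨆ k, B i k) * ∑ j, v j := (Finset.mul_sum ..).symm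

theorem iSup_mulVec_le [Finite m] {B : Matrix m n ℝ} (hB : ∀ i j, 0 ≤ B i j) {v : n → ℝ}
    (hv : 0 ≤ v) : ⨆ i, (B *ᵥ v) i ≤ (⨆ i, ∑ j, B i j) * ⨆ j, v j := by
  have iSup_v_nonneg : 0 ≤ ⨆ j, v j := Real.iSup_nonneg hv
  have iSup_row_nonneg : 0 ≤ ⨆ i, ∑ j, B i j :=
    Real.iSup_nonneg fun i => Finset.sum_nonneg fun j _ => hB i j
  refine Real.iSup_le (fun i => ?_) (mul_nonneg iSup_row_nonneg iSup_v_nonneg)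
  calc ∑ j, B i j * v j ≤ ∑ j, B i j * ⨆ k, v k := by
        gcongr with j
        · exact hB i j
        · exact Finite.le_ciSup v j
    _ = (∑ j, B i j) * ⨆ k, v k := (Finset.sum_mul ..).symm
    _ ≤ (⨆ i, ∑ j, B i j) * ⨆ k, v k :=
        mul_le_mul_of_nonneg_right (Finite.le_ciSup (fun i => ∑ j, B i j) i) iSup_v_nonneg

theorem sqrt_sum_sq_mulVec_le [Fintype m] (B : Matrix m n ℝ) (v : n → ℝ) :
    √(∑ i, (B *ᵥ v) i ^ 2) ≤ √(∑ i, ∑ j, B i j ^ 2) * √(∑ j, v j ^ 2) := by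
  rw [← Real.sqrt_mul (by positivity), Finset.sum_mul]
  exact Real.sqrt_le_sqrt (Finset.sum_le_sum fun i _ => Finset.sum_mul_sq_le_sq_mul_sq _ (B i) v)

end MulVecBounds

theorem scalar_bmetrics_from_vector {X : Type*} {n : ℕ} (hn : 0 < n)
    (B : Matrix (Fin n) (Fin n) ℝ) (d : X → X → Fin n → ℝ)
    (hmet : IsVectorBMetric B d) (hB : MatPos B) :
    IsBMetric (∑ i, ⨆ j, B i j) (fun x y => ∑ i, d x y i) ∧
    IsBMetric (⨆ i, ∑ j, B i j) (fun x y => ⨆ i, d x y i) ∧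
    IsBMetric (Real.sqrt (∑ i, ∑ j, (B i j) ^ 2))
      (fun x y => Real.sqrt (∑ i, (d x y i) ^ 2)) := by
  have b₁_nonneg : 0 ≤ ∑ i, ⨆ j, B i j :=
    Finset.sum_nonneg fun i _ => Real.iSup_nonneg (hB i)
  have b_infty_nonneg : 0 ≤ ⨆ i, ∑ j, B i j :=
    Real.iSup_nonneg fun i => Finset.sum_nonneg fun j _ => hB i j
  exact ⟨hmet.isBMetric_comp isScalarization_sum b₁_nonneg fun _ hv => sum_mulVec_le B hv,
    hmet.isBMetric_comp isScalarization_iSup b_infty_nonneg fun _ hv => iSup_mulVec_le hB hv,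
    hmet.isBMetric_comp isScalarization_sqrt_sum_sq (Real.sqrt_nonneg _)
      fun v _ => sqrt_sum_sq_mulVec_le B v⟩
end
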